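/- Let G~ be a mixed graph with a pendant vertex u whose unique neighbor in G is v, and let H~ = G~ − {u,v}. Suppose v lies on no even cycle of G. Then for any integer s with 0 ≤ s ≤ 2m*(G) − 2m(G) + 2κ(G), one has r(G~) = 2m(G) − 2κ(G) + s if and only if r(H~) = 2m(H) − 2κ(H) + s. -/

import Mathlib

/-!
Deleting a pendant vertex `u` together with its neighbour `v` lowers the `H`-rank by 2, lowers the
matching number by 1, and, since neither `u` nor `v` lies on an even cycle, does not change the
number of even cycles. Hence `r(G̃) - 2m(G) + 2κ(G)` is invariant under the deletion.

For the rank, the only nonzero entry in row `u` of the Hermitian adjacency matrix is in column `v`,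
and symmetrically for column `u`; removing such a row along with the column of its nonzero entry
lowers the rank by exactly 1.
-/

open scoped Classical

namespace MixedPaper

universe u

/-- A mixed graph: a finite simple graph together with an orientation of a subset
of its edges.  `arc u v = true` means there is an arc from `u` to `v`. -/
structure MixedGraph (V : Type u) where
  graph : SimpleGraph V
  arc : V → V → Bool
  arc_adj : ∀ u v, arc u v → graph.Adj u v
  arc_antisymm : ∀ u v, arc u v → ¬ arc v u

variable {V : Type u}

/-- The Hermitian adjacency matrix of a mixed graph. -/
noncomputable def MixedGraph.hMatrix [Fintype V] [DecidableEq V] (M : MixedGraph V) :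
    Matrix V V ℂ := fun u v =>
  if M.arc u v then Complex.I
  else if M.arc v u then -Complex.I
  else if M.graph.Adj u v then 1 else 0

/-- The H-rank of a mixed graph: the rank of its Hermitian adjacency matrix. -/
noncomputable def MixedGraph.hRank [Fintype V] [DecidableEq V] (M : MixedGraph V) : ℕ :=
  M.hMatrix.rank

/-- The matching number of a simple graph. -/
noncomputable def matchingNumber (G : SimpleGraph V) : ℕ :=
  sSup {k | ∃ N : G.Subgraph, N.IsMatching ∧ N.edgeSet.ncard = k}

/-- A subgraph is a cycle subgraph if it is connected and every one of its vertices
has exactly two neighbours in it. -/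
def IsCycleSubgraph {G : SimpleGraph V} (C : G.Subgraph) : Prop :=
  C.Connected ∧ ∀ v ∈ C.verts, {w | C.Adj v w}.ncard = 2

/-- κ(G) : the number of even cycles of G. -/
noncomputable def evenCycleCount (G : SimpleGraph V) : ℕ :=
  {C : G.Subgraph | IsCycleSubgraph C ∧ Even C.verts.ncard}.ncard

/-- c(G) = |E(G)| - |V(G)| + ω(G), the cyclomatic number. -/
noncomputable def cyclomatic [Fintype V] (G : SimpleGraph V) : ℤ :=
  (G.edgeSet.ncard : ℤ) - (Fintype.card V : ℤ) + (Nat.card G.ConnectedComponent : ℤ)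

/-- The induced mixed subgraph on a set of vertices. -/
def MixedGraph.induce (M : MixedGraph V) (S : Set V) : MixedGraph S where
  graph := M.graph.induce S
  arc := fun a b => M.arc a.1 b.1
  arc_adj := fun a b h => M.arc_adj a.1 b.1 h
  arc_antisymm := fun a b h => M.arc_antisymm a.1 b.1 h

/-- The mixed subgraph induced by a connected component of the underlying graph. -/
def MixedGraph.comp (M : MixedGraph V) (c : M.graph.ConnectedComponent) :
    MixedGraph c.supp := M.induce c.supp

/-- The signature |f - b| of a closed walk in a mixed graph: the absolute difference
between the numbers of forward and backward arcs along the walk. -/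
def walkSignature (M : MixedGraph V) {u : V} (w : M.graph.Walk u u) : ℕ :=
  ((w.darts.countP fun d => M.arc d.toProd.1 d.toProd.2 : ℤ) -
    (w.darts.countP fun d => M.arc d.toProd.2 d.toProd.1 : ℤ)).natAbs

/-- The signature of the cycle subgraph `C` of the mixed graph `M` satisfies the
predicate `P` (expressed via a closed walk traversing `C`; the signature does not
depend on the choice of traversal). -/
def CycleSig (M : MixedGraph V) (C : M.graph.Subgraph) (P : ℕ → Prop) : Prop :=
  ∃ (u : V) (w : M.graph.Walk u u), w.IsCycle ∧
    {v | v ∈ w.support} = C.verts ∧ {e | e ∈ w.edges} = C.edgeSet ∧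
    P (walkSignature M w)

/-- `C` is a pendant cycle with unique vertex `x` of degree 3. -/
def IsPendantCycle (G : SimpleGraph V) (C : G.Subgraph) (x : V) : Prop :=
  IsCycleSubgraph C ∧ x ∈ C.verts ∧ {w | G.Adj x w}.ncard = 3 ∧
    ∀ v ∈ C.verts, v ≠ x → {w | G.Adj v w}.ncard = 2

/-- G has no pendant vertices (vertices of degree 1). -/
def NoPendantVerts (G : SimpleGraph V) : Prop := ∀ u : V, {w | G.Adj u w}.ncard ≠ 1

/-- The (distinct) cycles of G are pairwise vertex-disjoint. -/
def CyclesVertexDisjoint (G : SimpleGraph V) : Prop :=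
  ∀ C₁ C₂ : G.Subgraph, IsCycleSubgraph C₁ → IsCycleSubgraph C₂ → C₁ ≠ C₂ →
    Disjoint C₁.verts C₂.verts

/-- The (distinct) even cycles of G are pairwise vertex-disjoint. -/
def EvenCyclesVertexDisjoint (G : SimpleGraph V) : Prop :=
  ∀ C₁ C₂ : G.Subgraph, IsCycleSubgraph C₁ → IsCycleSubgraph C₂ →
    Even C₁.verts.ncard → Even C₂.verts.ncard → C₁ ≠ C₂ →
    Disjoint C₁.verts C₂.verts

/-- One pendant `K₂` deletion step, recorded on the surviving vertex sets:
`u` is pendant in the graph induced on `S` with unique neighbour `v` there,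
and both are deleted. -/
def PendantStep (G : SimpleGraph V) (S T : Set V) : Prop :=
  ∃ u v, u ∈ S ∧ v ∈ S ∧ {w | w ∈ S ∧ G.Adj u w} = {v} ∧ T = S \ {u, v}

/-- `S` is reachable from the full vertex set by a sequence of pendant K₂ deletions. -/
def PendantReaches (G : SimpleGraph V) (S : Set V) : Prop :=
  Relation.ReflTransGen (PendantStep G) Set.univ S

/-- The graph induced on `S` has no pendant vertices. -/
def NoPendantIn (G : SimpleGraph V) (S : Set V) : Prop :=
  ∀ u ∈ S, {w | w ∈ S ∧ G.Adj u w}.ncard ≠ 1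

/-- `u` lies on some even cycle of `G`. -/
def OnEvenCycle (G : SimpleGraph V) (u : V) : Prop :=
  ∃ C : G.Subgraph, IsCycleSubgraph C ∧ Even C.verts.ncard ∧ u ∈ C.verts

/-- G is the graph ∞(p,1,q): two cycles of lengths p and q sharing exactly one vertex. -/
def IsInfinityGraph (G : SimpleGraph V) (p q : ℕ) : Prop :=
  ∃ C₁ C₂ : G.Subgraph, IsCycleSubgraph C₁ ∧ IsCycleSubgraph C₂ ∧
    C₁.verts.ncard = p ∧ C₂.verts.ncard = q ∧
    (C₁.verts ∩ C₂.verts).ncard = 1 ∧ C₁ ⊔ C₂ = ⊤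

/-- G is the theta graph θ(p,l,q): three internally disjoint paths with p, l, q
vertices respectively, joining two common endvertices. -/
def IsThetaGraph (G : SimpleGraph V) (p l q : ℕ) : Prop :=
  2 ≤ p ∧ 2 ≤ l ∧ 2 ≤ q ∧ ¬(p = 2 ∧ l = 2) ∧ ¬(p = 2 ∧ q = 2) ∧ ¬(l = 2 ∧ q = 2) ∧
  ∃ (a b : V) (W₁ W₂ W₃ : G.Walk a b), W₁.IsPath ∧ W₂.IsPath ∧ W₃.IsPath ∧
    W₁.length = p - 1 ∧ W₂.length = l - 1 ∧ W₃.length = q - 1 ∧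
    (∀ v : V, v ∈ W₁.support ∨ v ∈ W₂.support ∨ v ∈ W₃.support) ∧
    (∀ e ∈ G.edgeSet, e ∈ W₁.edges ∨ e ∈ W₂.edges ∨ e ∈ W₃.edges) ∧
    {v | v ∈ W₁.support ∧ v ∈ W₂.support} = {a, b} ∧
    {v | v ∈ W₁.support ∧ v ∈ W₃.support} = {a, b} ∧
    {v | v ∈ W₂.support ∧ v ∈ W₃.support} = {a, b}

/-- Every odd cycle of `M` has signature satisfying `P`. -/
def OddCyclesSig (M : MixedGraph V) (P : ℕ → Prop) : Prop :=
  ∀ C : M.graph.Subgraph, IsCycleSubgraph C → Odd C.verts.ncard → CycleSig M C P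

/-- Every even cycle of `M`, of length `n`, has signature `s` satisfying `P n s`. -/
def EvenCyclesSig (M : MixedGraph V) (P : ℕ → ℕ → Prop) : Prop :=
  ∀ C : M.graph.Subgraph, IsCycleSubgraph C → Even C.verts.ncard →
    CycleSig M C (P C.verts.ncard)

/-- The whole mixed graph is a single cycle. -/
def IsCycleMG (M : MixedGraph V) : Prop := IsCycleSubgraph (⊤ : M.graph.Subgraph)

/-- The family 𝔊₀. -/
def MemG0 [Fintype V] [DecidableEq V] (M : MixedGraph V) : Prop :=
  M.graph.Connected ∧ 1 ≤ cyclomatic M.graph ∧ CyclesVertexDisjoint M.graph ∧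
  NoPendantVerts M.graph ∧
  ∃ (C : M.graph.Subgraph) (x : V), IsPendantCycle M.graph C x ∧ Odd C.verts.ncard ∧
    CycleSig M C Odd ∧
    ((M.induce (C.vertsᶜ ∪ {x})).hRank : ℤ) =
      2 * (matchingNumber (M.induce (C.vertsᶜ ∪ {x})).graph : ℤ) -
        2 * cyclomatic (M.induce (C.vertsᶜ ∪ {x})).graph

/-- The family 𝔛₁ : mixed ∞(p,1,q)-graphs, p even, q odd, whose odd cycle has odd
signature and whose even cycle C̃_p satisfies σ ≡ p (mod 4). -/
def MemX1 (M : MixedGraph V) : Prop :=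
  ∃ p q : ℕ, Even p ∧ Odd q ∧ IsInfinityGraph M.graph p q ∧
    OddCyclesSig M Odd ∧ EvenCyclesSig M (fun n s => s % 4 = n % 4)

/-- The family 𝔛₂ : mixed θ(p,l,q)-graphs, p even, l q odd, whose two odd cycles have odd
signatures and whose even cycle C̃_{q+l-2} satisfies q + l + σ ≡ 2 (mod 4). -/
def MemX2 (M : MixedGraph V) : Prop :=
  ∃ p l q : ℕ, Even p ∧ Odd l ∧ Odd q ∧ IsThetaGraph M.graph p l q ∧
    OddCyclesSig M Odd ∧ EvenCyclesSig M (fun _ s => (q + l + s) % 4 = 2)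

/-- The family 𝔊₂ = 𝔊₀ ∪ 𝔛₁ ∪ 𝔛₂ together with the mixed odd cycles of odd signature. -/
def MemG2 [Fintype V] [DecidableEq V] (M : MixedGraph V) : Prop :=
  MemG0 M ∨ MemX1 M ∨ MemX2 M ∨
    (IsCycleMG M ∧ Odd (Nat.card V) ∧ CycleSig M ⊤ Odd)

/-- The family 𝔜₁. -/
def MemY1 (M : MixedGraph V) : Prop :=
  ∃ p q : ℕ, Even p ∧ Odd q ∧ IsInfinityGraph M.graph p q ∧
    OddCyclesSig M Even ∧ EvenCyclesSig M (fun n s => s % 4 = n % 4)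

/-- The family 𝔜₂. -/
def MemY2 (M : MixedGraph V) : Prop :=
  ∃ p l q : ℕ, Even p ∧ Odd l ∧ Odd q ∧ IsThetaGraph M.graph p l q ∧
    OddCyclesSig M Even ∧ EvenCyclesSig M (fun _ s => (q + l + s) % 4 = 2)

/-- `M` is a disjoint union of `k` even cycles and one odd cycle with even signature. -/
def IsDisjointUnionEvenCyclesOddCycleEvenSig (M : MixedGraph V) (k : ℤ) : Prop :=
  (∀ c : M.graph.ConnectedComponent, IsCycleMG (M.comp c)) ∧
  (({c : M.graph.ConnectedComponent | Even (Nat.card c.supp)}.ncard : ℤ) = k) ∧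
  (∃! c : M.graph.ConnectedComponent, Odd (Nat.card c.supp)) ∧
  (∀ c : M.graph.ConnectedComponent, Odd (Nat.card c.supp) →
    CycleSig (M.comp c) ⊤ Even)

/-- The family 𝔉₀. -/
def MemF0 [Fintype V] [DecidableEq V] (M : MixedGraph V) : Prop :=
  M.graph.Connected ∧ 2 ≤ cyclomatic M.graph ∧ CyclesVertexDisjoint M.graph ∧
  NoPendantVerts M.graph ∧
  (∃ (C₀ : M.graph.Subgraph) (x₀ : V), IsPendantCycle M.graph C₀ x₀ ∧ Odd C₀.verts.ncard ∧
    CycleSig M C₀ Even ∧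
    ∀ C : M.graph.Subgraph, IsCycleSubgraph C → C ≠ C₀ →
      Even C.verts.ncard ∧ CycleSig M C (fun s => s % 4 = C.verts.ncard % 4)) ∧
  (∃ (Cq : M.graph.Subgraph) (x : V), IsPendantCycle M.graph Cq x ∧ Even Cq.verts.ncard ∧
    ∃ S : Set ↥(Cq.vertsᶜ ∪ {x}),
      PendantReaches (M.induce (Cq.vertsᶜ ∪ {x})).graph S ∧
      NoPendantIn (M.induce (Cq.vertsᶜ ∪ {x})).graph S ∧
      IsDisjointUnionEvenCyclesOddCycleEvenSig
        ((M.induce (Cq.vertsᶜ ∪ {x})).induce S)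
        (cyclomatic (M.induce (Cq.vertsᶜ ∪ {x})).graph))

/-- The family 𝔉₂ = 𝔉₀ ∪ 𝔜₁ ∪ 𝔜₂ together with the mixed odd cycles of even signature. -/
def MemF2 [Fintype V] [DecidableEq V] (M : MixedGraph V) : Prop :=
  MemF0 M ∨ MemY1 M ∨ MemY2 M ∨
    (IsCycleMG M ∧ Odd (Nat.card V) ∧ CycleSig M ⊤ Even)

/-- A connected component that is either an even cycle C̃_q with σ ≡ q (mod 4),
or an isolated vertex. -/
def GoodOtherComp (M : MixedGraph V) : Prop :=
  (IsCycleMG M ∧ Even (Nat.card V) ∧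
    CycleSig M ⊤ (fun s => s % 4 = (Nat.card V) % 4)) ∨
  Nat.card V = 1

/-- A fractional matching of `G`, given as a weight function on `Sym2 V` vanishing
outside the edge set. -/
def IsFracMatching [Fintype V] [DecidableEq V] (G : SimpleGraph V) (f : Sym2 V → ℝ) : Prop :=
  (∀ e ∈ G.edgeSet, 0 ≤ f e ∧ f e ≤ 1) ∧ (∀ e, e ∉ G.edgeSet → f e = 0) ∧
    ∀ v : V, ∑ e ∈ Finset.univ.filter (fun e : Sym2 V => v ∈ e), f e ≤ 1

/-- The fractional matching number m*(G). -/
noncomputable def fracMatchingNumber [Fintype V] [DecidableEq V] (G : SimpleGraph V) : ℝ :=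
  sSup {x : ℝ | ∃ f : Sym2 V → ℝ, IsFracMatching G f ∧ ∑ e : Sym2 V, f e = x}

/-- Membership in the family ℱ : fractional matchings of total weight m*(G) taking
values in {0, 1/2, 1}. -/
def InOptFamily [Fintype V] [DecidableEq V] (G : SimpleGraph V) (f : Sym2 V → ℝ) : Prop :=
  IsFracMatching G f ∧ (∑ e : Sym2 V, f e) = fracMatchingNumber G ∧
    ∀ e : Sym2 V, f e = 0 ∨ f e = 1 / 2 ∨ f e = 1

/-- An optimal fractional matching: a member of ℱ with the largest number of
edges of weight 1. -/
def IsOptFracMatching [Fintype V] [DecidableEq V] (G : SimpleGraph V) (f : Sym2 V → ℝ) : Prop :=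
  InOptFamily G f ∧
    ∀ g : Sym2 V → ℝ, InOptFamily G g →
      {e : Sym2 V | g e = 1}.ncard ≤ {e : Sym2 V | f e = 1}.ncard

/-- E₁(C) : the edges of `G` with exactly one endpoint on the cycle `C`. -/
def cutEdges (G : SimpleGraph V) (C : G.Subgraph) : Set (Sym2 V) :=
  {e | e ∈ G.edgeSet ∧ ∃ a b : V, e = s(a, b) ∧ a ∈ C.verts ∧ b ∉ C.verts}

section MatrixRank

variable {m n m' n' K : Type*} [Fintype n] [Fintype n'] [Field K]

lemma mulVec_eq_zero_iff_of_row {A : Matrix m n K} {i : m} {j : n} {r : m' → m} {c : n' → n}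
    (hrow : ∀ k, A i k ≠ 0 ↔ k = j) (hr : {i}ᶜ ⊆ Set.range r) (hc : Function.Injective c)
    (hcj : {j}ᶜ ⊆ Set.range c) (x : n → K) :
    A.mulVec x = 0 ↔ x j = 0 ∧ (A.submatrix r c).mulVec (x ∘ c) = 0 := by
  have hpivot : A.mulVec x i = A i j * x j :=
    Fintype.sum_eq_single j fun k hk => mul_eq_zero_of_left (not_not.1 (mt (hrow k).1 hk)) _
  have hxj : A.mulVec x i = 0 ↔ x j = 0 := by
    rw [hpivot, mul_eq_zero, or_iff_right ((hrow j).2 rfl)]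
  have hrest (h : x j = 0) (k : m') :
      A.mulVec x (r k) = (A.submatrix r c).mulVec (x ∘ c) k := by
    refine (Fintype.sum_of_injective c hc _ _ (fun l hl => ?_) fun _ => rfl).symm
    have hlj : l = j := not_not.1 (mt (@hcj l) hl)
    exact mul_eq_zero_of_right _ (hlj ▸ h)
  constructor
  · intro hx
    have h := hxj.1 (congrFun hx i)
    exact ⟨h, funext fun k => (hrest h k).symm.trans (congrFun hx (r k))⟩
  · rintro ⟨h, hx⟩
    funext k
    by_cases hk : k = i
    · exact hk ▸ hxj.2 h
    · obtain ⟨l, rfl⟩ := hr hk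
      exact (hrest h l).trans (congrFun hx l)

lemma ker_mulVecLin_eq_map_extendByZero {A : Matrix m n K} {i : m} {j : n} {r : m' → m}
    {c : n' → n} (hrow : ∀ k, A i k ≠ 0 ↔ k = j) (hr : {i}ᶜ ⊆ Set.range r)
    (hc : Function.Injective c) (hcj : Set.range c = {j}ᶜ) :
    LinearMap.ker A.mulVecLin =
      (LinearMap.ker (A.submatrix r c).mulVecLin).map (Function.ExtendByZero.linearMap K c) := by
  have hker := mulVec_eq_zero_iff_of_row hrow hr hc hcj.superset
  ext x
  simp only [LinearMap.mem_ker, Matrix.mulVecLin_apply, Submodule.mem_map, hker]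
  constructor
  · rintro ⟨hxj, hx⟩
    refine ⟨x ∘ c, hx, funext fun k => ?_⟩
    by_cases hk : k = j
    · have hkc : ¬ ∃ l, c l = k := fun h => hcj.subset h hk
      exact (Function.extend_apply' _ _ _ hkc).trans (hk ▸ hxj.symm)
    · obtain ⟨l, rfl⟩ := hcj.superset hk
      exact hc.extend_apply _ _ _
  · rintro ⟨y, hy, rfl⟩
    refine ⟨Function.extend_apply' _ _ _ fun h => hcj.subset h rfl, ?_⟩
    have hcomp : Function.ExtendByZero.linearMap K c y ∘ c = y := funext (hc.extend_apply y 0)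
    rwa [hcomp]

lemma rank_eq_rank_submatrix_add_one_of_row {A : Matrix m n K} {i : m} {j : n} {r : m' → m}
    {c : n' → n} (hrow : ∀ k, A i k ≠ 0 ↔ k = j) (hr : {i}ᶜ ⊆ Set.range r)
    (hc : Function.Injective c) (hcj : Set.range c = {j}ᶜ) :
    A.rank = (A.submatrix r c).rank + 1 := by
  have hcard : Fintype.card n = Fintype.card n' + 1 := by
    have h := Set.ncard_add_ncard_compl {j}
    rw [← hcj, ← Set.image_univ, Set.ncard_image_of_injective _ hc, Set.ncard_univ,
      Set.ncard_singleton, Nat.card_eq_fintype_card, Nat.card_eq_fintype_card] at h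
    rw [← h, add_comm]
  have hker : Module.finrank K (LinearMap.ker A.mulVecLin) =
      Module.finrank K (LinearMap.ker (A.submatrix r c).mulVecLin) := by
    rw [ker_mulVecLin_eq_map_extendByZero hrow hr hc hcj]
    have hext := Function.extend_injective hc (0 : n → K)
    exact (Submodule.equivMapOfInjective _ hext _).finrank_eq.symm
  have hA := A.mulVecLin.finrank_range_add_finrank_ker
  have hA' := (A.submatrix r c).mulVecLin.finrank_range_add_finrank_ker
  rw [Module.finrank_fintype_fun_eq_card] at hA hA'
  unfold Matrix.rank
  omega

lemma rank_eq_rank_submatrix_add_one_of_col [Finite m] {A : Matrix m n K} {i : m}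
    {j : n} {r : m' → m} {c : n' → n} (hcol : ∀ k, A k j ≠ 0 ↔ k = i)
    (hr : Function.Injective r) (hri : Set.range r = {i}ᶜ) (hc : {j}ᶜ ⊆ Set.range c) :
    A.rank = (A.submatrix r c).rank + 1 := by
  have := Fintype.ofFinite m
  have : Finite m' := .of_injective r hr
  have := Fintype.ofFinite m'
  rw [← A.rank_transpose, ← (A.submatrix r c).rank_transpose, Matrix.transpose_submatrix]
  exact rank_eq_rank_submatrix_add_one_of_row hcol hc hr hri

lemma rank_eq_rank_submatrix_compl_pair_add_two [DecidableEq n] {A : Matrix n n K} {i j : n}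
    (hij : i ≠ j) (hrow : ∀ k, A i k ≠ 0 ↔ k = j) (hcol : ∀ k, A k i ≠ 0 ↔ k = j) :
    A.rank = (A.submatrix (Subtype.val : ({i, j}ᶜ : Set n) → n)
      (Subtype.val : ({i, j}ᶜ : Set n) → n)).rank + 2 := by
  let B := A.submatrix (Subtype.val : ({i}ᶜ : Set n) → n) (Subtype.val : ({j}ᶜ : Set n) → n)
  let r : ({i, j}ᶜ : Set n) → ({i}ᶜ : Set n) := Set.inclusion (by simp)
  let c : ({i, j}ᶜ : Set n) → ({j}ᶜ : Set n) := Set.inclusion (by simp)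
  have hr : Set.range r = {⟨j, hij.symm⟩}ᶜ := by
    ext ⟨k, hk⟩
    simp [r, Subtype.ext_iff, show k ≠ i from hk]
  have hc : Set.range c = {⟨i, hij⟩}ᶜ := by
    ext ⟨k, hk⟩
    simp [c, Subtype.ext_iff, show k ≠ j from hk]
  have hcolB (k : ({i}ᶜ : Set n)) : B k ⟨i, hij⟩ ≠ 0 ↔ k = ⟨j, hij.symm⟩ := by
    rw [Subtype.ext_iff]
    exact hcol k
  calc
    A.rank = B.rank + 1 :=
      rank_eq_rank_submatrix_add_one_of_row hrow Subtype.range_coe.superset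
        Subtype.val_injective Subtype.range_coe
    _ = (B.submatrix r c).rank + 1 + 1 :=
      congrArg (· + 1) (rank_eq_rank_submatrix_add_one_of_col hcolB (Set.inclusion_injective _) hr
        hc.superset)

end MatrixRank

namespace MixedGraph

variable [Fintype V] [DecidableEq V] (M : MixedGraph V)

lemma hMatrix_ne_zero_iff {x y : V} : M.hMatrix x y ≠ 0 ↔ M.graph.Adj x y := by
  unfold hMatrix
  split_ifs with hxy hyx hadj
  · simpa using M.arc_adj x y hxy
  · simpa using (M.arc_adj y x hyx).symm
  · simpa using hadj
  · simpa using hadj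

lemma hMatrix_induce (S : Set V) [Fintype S] :
    (M.induce S).hMatrix = M.hMatrix.submatrix Subtype.val Subtype.val := by
  ext x y
  simp [hMatrix, induce]

variable {M} in
lemma hRank_eq_hRank_induce_compl_pair_add_two {u v : V}
    (hpend : M.graph.neighborSet u = {v}) :
    M.hRank = (M.induce ({u, v} : Set V)ᶜ).hRank + 2 := by
  have hadj (w : V) : M.graph.Adj u w ↔ w = v := Set.ext_iff.1 hpend w
  have huv : u ≠ v := ((hadj v).2 rfl).ne
  unfold hRank
  rw [hMatrix_induce]
  refine rank_eq_rank_submatrix_compl_pair_add_two huv (fun w => ?_) fun w => ?_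
  · rw [hMatrix_ne_zero_iff, hadj]
  · rw [hMatrix_ne_zero_iff, M.graph.adj_comm, hadj]

end MixedGraph

section MatchingNumber

open SimpleGraph

variable {W : Type*} {G : SimpleGraph V} {H : SimpleGraph W}

lemma bddAbove_ncard_edgeSet_isMatching [Finite V] (G : SimpleGraph V) :
    BddAbove {k | ∃ N : G.Subgraph, N.IsMatching ∧ N.edgeSet.ncard = k} := by
  refine ((Set.finite_range fun N : G.Subgraph => N.edgeSet.ncard).subset ?_).bddAbove
  rintro _ ⟨N, -, rfl⟩
  exact ⟨N, rfl⟩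

lemma exists_isMatching_ncard_edgeSet_eq_matchingNumber [Finite V] (G : SimpleGraph V) :
    ∃ N : G.Subgraph, N.IsMatching ∧ N.edgeSet.ncard = matchingNumber G :=
  Nat.sSup_mem (s := {k | ∃ N : G.Subgraph, N.IsMatching ∧ N.edgeSet.ncard = k})
    ⟨0, ⊥, fun _ hv => hv.elim, by simp⟩ (bddAbove_ncard_edgeSet_isMatching G)

lemma ncard_edgeSet_le_matchingNumber [Finite V] (N : G.Subgraph)
    (hN : ∀ ⦃x y z⦄, N.Adj x y → N.Adj x z → y = z) : N.edgeSet.ncard ≤ matchingNumber G := by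
  let N' : G.Subgraph := { N with verts := N.support, edge_vert := fun h => ⟨_, h⟩ }
  have hN' : N'.IsMatching := fun _ ⟨y, hxy⟩ => ⟨y, hxy, fun _ hxz => hN hxz hxy⟩
  exact le_csSup (bddAbove_ncard_edgeSet_isMatching G) ⟨N', hN', rfl⟩

lemma ncard_incidenceSet_le_one {N : G.Subgraph} (hN : N.IsMatching) (v : V) :
    (N.incidenceSet v).ncard ≤ 1 := by
  have hsub : (N.incidenceSet v).Subsingleton := by
    rintro e ⟨he, hve⟩ e' ⟨he', hve'⟩
    obtain ⟨y, rfl⟩ := Sym2.mem_iff_exists.1 hve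
    obtain ⟨z, rfl⟩ := Sym2.mem_iff_exists.1 hve'
    have hyz : y = z := hN.eq_of_adj_left he he'
    rw [hyz]
  exact (Set.ncard_le_one hsub.finite).2 fun _ he _ he' => hsub he he'

lemma matchingNumber_le_add_one [Finite V] (f : H ↪g G) (v : V)
    (hf : ∀ ⦃x y⦄, G.Adj x y → x ≠ v → y ≠ v → x ∈ Set.range f) :
    matchingNumber G ≤ matchingNumber H + 1 := by
  have : Finite W := .of_injective f f.injective
  obtain ⟨N, hN, hcard⟩ := exists_isMatching_ncard_edgeSet_eq_matchingNumber G
  have hcover : N.edgeSet ⊆ Sym2.map f '' (N.comap f.toHom).edgeSet ∪ N.incidenceSet v := by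
    intro e he
    by_cases hve : v ∈ e
    · exact .inr ⟨he, hve⟩
    induction e with
    | _ x y =>
      obtain ⟨hvx, hvy⟩ := not_or.1 (mt Sym2.mem_iff.2 hve)
      have hxy := N.adj_sub he
      obtain ⟨x, rfl⟩ := hf hxy (Ne.symm hvx) (Ne.symm hvy)
      obtain ⟨y, rfl⟩ := hf hxy.symm (Ne.symm hvy) (Ne.symm hvx)
      exact .inl ⟨s(x, y), ⟨f.map_adj_iff.1 hxy, he⟩, rfl⟩
  have hcomap : (N.comap f.toHom).edgeSet.ncard ≤ matchingNumber H :=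
    ncard_edgeSet_le_matchingNumber _ fun _ _ _ hxy hxz =>
      f.injective (hN.eq_of_adj_left hxy.2 hxz.2)
  calc
    matchingNumber G = N.edgeSet.ncard := hcard.symm
    _ ≤ (Sym2.map f '' (N.comap f.toHom).edgeSet ∪ N.incidenceSet v).ncard :=
      Set.ncard_le_ncard hcover
    _ ≤ (Sym2.map f '' (N.comap f.toHom).edgeSet).ncard + (N.incidenceSet v).ncard :=
      Set.ncard_union_le _ _
    _ ≤ matchingNumber H + 1 :=
      add_le_add ((Set.ncard_image_le).trans hcomap) (ncard_incidenceSet_le_one hN v)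

lemma matchingNumber_add_one_le [Finite V] (f : H →g G) (hf : Function.Injective f) {u v : V}
    (huv : G.Adj u v) (hu : u ∉ Set.range f) (hv : v ∉ Set.range f) :
    matchingNumber H + 1 ≤ matchingNumber G := by
  have : Finite W := .of_injective f hf
  obtain ⟨N, hN, hcard⟩ := exists_isMatching_ncard_edgeSet_eq_matchingNumber H
  have hverts : Disjoint (N.map f).verts (G.subgraphOfAdj huv).verts := by
    rw [Set.disjoint_left]
    rintro _ ⟨x, -, rfl⟩ (hx | hx)
    exacts [hu ⟨x, hx⟩, hv ⟨x, hx⟩]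
  have hedges : s(u, v) ∉ (N.map f).edgeSet := fun h =>
    Set.disjoint_left.1 hverts ((N.map f).edge_vert h) (.inl rfl)
  have hmatching : (N.map f ⊔ G.subgraphOfAdj huv).IsMatching :=
    (hN.map f hf).sup (.subgraphOfAdj huv)
      (hverts.mono (Subgraph.support_subset_verts _) (Subgraph.support_subset_verts _))
  calc
    matchingNumber H + 1 = (N.map f ⊔ G.subgraphOfAdj huv).edgeSet.ncard := by
      rw [Subgraph.edgeSet_sup, edgeSet_subgraphOfAdj, Set.union_singleton,
        Set.ncard_insert_of_notMem hedges, Subgraph.edgeSet_map,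
        Set.ncard_image_of_injective _ (Sym2.map.injective hf), hcard]
    _ ≤ matchingNumber G :=
      ncard_edgeSet_le_matchingNumber _ fun _ _ _ => hmatching.eq_of_adj_left

lemma matchingNumber_eq_matchingNumber_induce_compl_pair_add_one [Finite V] {u v : V}
    (hpend : G.neighborSet u = {v}) :
    matchingNumber G = matchingNumber (G.induce ({u, v} : Set V)ᶜ) + 1 := by
  have hadj (w : V) : G.Adj u w ↔ w = v := Set.ext_iff.1 hpend w
  let f : G.induce ({u, v} : Set V)ᶜ ↪g G := Embedding.induce _
  have hrange : Set.range f = {u, v}ᶜ := Subtype.range_coe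
  apply le_antisymm
  · refine matchingNumber_le_add_one f v fun x y hxy hx hy => ?_
    have hxu : x ≠ u := by
      rintro rfl
      exact hy ((hadj y).1 hxy)
    simp [hrange, hxu, hx]
  · apply matchingNumber_add_one_le f.toHom f.injective ((hadj v).2 rfl)
    · exact fun h => hrange.subset h (.inl rfl)
    · exact fun h => hrange.subset h (.inr rfl)

end MatchingNumber

section EvenCycles

open SimpleGraph

variable {W : Type*} {G : SimpleGraph V} {H : SimpleGraph W}

lemma subgraph_map_adj_iff {f : H →g G} (hf : Function.Injective f) {C : H.Subgraph} {x y : W} :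
    (C.map f).Adj (f x) (f y) ↔ C.Adj x y := by
  refine ⟨?_, fun h => ⟨x, y, h, rfl, rfl⟩⟩
  rintro ⟨x', y', hxy, hx, hy⟩
  exact hf hx ▸ hf hy ▸ hxy

lemma subgraph_comap_map {f : H →g G} (hf : Function.Injective f) (C : H.Subgraph) :
    (C.map f).comap f = C := by
  refine Subgraph.ext (Set.preimage_image_eq _ hf) (funext₂ fun x y => propext ?_)
  rw [Subgraph.comap_adj, subgraph_map_adj_iff hf]
  exact ⟨And.right, fun h => ⟨C.adj_sub h, h⟩⟩

lemma subgraph_map_comap (f : H ↪g G) {C : G.Subgraph} (hC : C.verts ⊆ Set.range f) :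
    (C.comap f.toHom).map f.toHom = C := by
  refine le_antisymm ((Subgraph.map_le_iff_le_comap ..).2 le_rfl) ⟨fun x hx => ?_, ?_⟩
  · obtain ⟨x, rfl⟩ := hC hx
    exact ⟨x, hx, rfl⟩
  · intro x y hxy
    obtain ⟨x, rfl⟩ := hC hxy.fst_mem
    obtain ⟨y, rfl⟩ := hC hxy.snd_mem
    exact ⟨x, y, ⟨f.map_adj_iff.1 (C.adj_sub hxy), hxy⟩, rfl, rfl⟩

lemma subgraph_connected_map_iff {f : H →g G} (hf : Function.Injective f) {C : H.Subgraph} :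
    (C.map f).Connected ↔ C.Connected := by
  let e : C.coe ≃g (C.map f).coe := ⟨Equiv.Set.image f C.verts hf, subgraph_map_adj_iff hf⟩
  rw [Subgraph.connected_iff', Subgraph.connected_iff', e.connected_iff]

lemma isCycleSubgraph_map_iff {f : H →g G} (hf : Function.Injective f) {C : H.Subgraph} :
    IsCycleSubgraph (C.map f) ↔ IsCycleSubgraph C := by
  have hneighbors (x : W) : {w | (C.map f).Adj (f x) w} = f '' {w | C.Adj x w} := by
    ext w
    constructor
    · rintro ⟨x', y, hxy, hx, rfl⟩
      exact ⟨y, hf hx ▸ hxy, rfl⟩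
    · rintro ⟨y, hxy, rfl⟩
      exact ⟨x, y, hxy, rfl, rfl⟩
  simp only [IsCycleSubgraph, subgraph_connected_map_iff hf, Subgraph.map_verts,
    Set.forall_mem_image, hneighbors, Set.ncard_image_of_injective _ hf]

lemma evenCycleCount_eq_of_embedding (f : H ↪g G)
    (hf : ∀ C : G.Subgraph, IsCycleSubgraph C → Even C.verts.ncard → C.verts ⊆ Set.range f) :
    evenCycleCount H = evenCycleCount G := by
  have hf_inj : Function.Injective f.toHom := f.injective
  have hmap_inj : Function.Injective (Subgraph.map f.toHom) :=
    Function.LeftInverse.injective (subgraph_comap_map hf_inj)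
  have heven (C : H.Subgraph) : (IsCycleSubgraph (C.map f.toHom) ∧
      Even (C.map f.toHom).verts.ncard) ↔ IsCycleSubgraph C ∧ Even C.verts.ncard := by
    rw [isCycleSubgraph_map_iff hf_inj, Subgraph.map_verts, Set.ncard_image_of_injective _ hf_inj]
  unfold evenCycleCount
  rw [← Set.ncard_image_of_injective _ hmap_inj]
  congr 1
  ext C
  constructor
  · rintro ⟨D, hD, rfl⟩
    exact (heven D).2 hD
  · intro hC
    have hmap := subgraph_map_comap f (hf C hC.1 hC.2)
    exact ⟨C.comap f.toHom, (heven _).1 (hmap.symm ▸ hC), hmap⟩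

lemma IsCycleSubgraph.notMem_verts_of_neighborSet_eq_singleton {C : G.Subgraph}
    (hC : IsCycleSubgraph C) {u v : V} (hpend : G.neighborSet u = {v}) : u ∉ C.verts := by
  intro hu
  have hsub : {w | C.Adj u w} ⊆ {v} := hpend ▸ C.neighborSet_subset u
  have hle := Set.ncard_le_ncard hsub
  rw [hC.2 u hu, Set.ncard_singleton] at hle
  omega

lemma evenCycleCount_induce_compl_pair {u v : V} (hpend : G.neighborSet u = {v})
    (hv : ¬ OnEvenCycle G v) :
    evenCycleCount (G.induce ({u, v} : Set V)ᶜ) = evenCycleCount G := by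
  refine evenCycleCount_eq_of_embedding (Embedding.induce _) fun C hC heven x hx => ?_
  refine Subtype.range_coe.superset ?_
  rintro (rfl | rfl)
  · exact hC.notMem_verts_of_neighborSet_eq_singleton hpend hx
  · exact hv ⟨C, hC, heven, hx⟩

end EvenCycles

theorem pendant_deletion_rank_iff_general
    {V : Type u} [Fintype V] [DecidableEq V] (M : MixedGraph V) (u v : V)
    (hpend : {w | M.graph.Adj u w} = {v}) (hv : ¬ OnEvenCycle M.graph v) (s : ℤ) :
    ((M.hRank : ℤ) =
        2 * (matchingNumber M.graph : ℤ) - 2 * (evenCycleCount M.graph : ℤ) + s ↔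
      ((M.induce ({u, v} : Set V)ᶜ).hRank : ℤ) =
        2 * (matchingNumber (M.induce ({u, v} : Set V)ᶜ).graph : ℤ) -
          2 * (evenCycleCount (M.induce ({u, v} : Set V)ᶜ).graph : ℤ) + s) := by
  have hrank : M.hRank = (M.induce ({u, v} : Set V)ᶜ).hRank + 2 :=
    MixedGraph.hRank_eq_hRank_induce_compl_pair_add_two hpend
  have hmatching : matchingNumber M.graph =
      matchingNumber (M.induce ({u, v} : Set V)ᶜ).graph + 1 :=
    matchingNumber_eq_matchingNumber_induce_compl_pair_add_one hpend
  have hcycles : evenCycleCount (M.induce ({u, v} : Set V)ᶜ).graph = evenCycleCount M.graph :=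
    evenCycleCount_induce_compl_pair hpend hv
  omega

/-- Let u be a pendant vertex of G̃ with unique neighbour v lying
on no even cycle of G, and let H̃ = G̃ − {u,v}. Then for every integer s with
0 ≤ s ≤ 2m*(G) − 2m(G) + 2κ(G):  r(G̃) = 2m(G) − 2κ(G) + s iff
r(H̃) = 2m(H) − 2κ(H) + s. -/
theorem pendant_deletion_rank_iff
    {V : Type u} [Fintype V] [DecidableEq V] (M : MixedGraph V) (u v : V)
    (hpend : {w | M.graph.Adj u w} = {v}) (hv : ¬ OnEvenCycle M.graph v)
    (s : ℤ) (hs0 : 0 ≤ s)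
    (hs1 : (s : ℝ) ≤ 2 * fracMatchingNumber M.graph
      - 2 * (matchingNumber M.graph : ℝ) + 2 * (evenCycleCount M.graph : ℝ)) :
    ((M.hRank : ℤ) =
        2 * (matchingNumber M.graph : ℤ) - 2 * (evenCycleCount M.graph : ℤ) + s ↔
      ((M.induce ({u, v} : Set V)ᶜ).hRank : ℤ) =
        2 * (matchingNumber (M.induce ({u, v} : Set V)ᶜ).graph : ℤ) -
          2 * (evenCycleCount (M.induce ({u, v} : Set V)ᶜ).graph : ℤ) + s) :=
  pendant_deletion_rank_iff_general M u v hpend hv s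

end MixedPaper
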